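/- With C_s = (2^{4/(s−1)}/(s−1)) · (√π Γ(s/2)/Γ((s−1)/2))^{2/(s−1)}, one has s·C_s → 1 as s → ∞ (in particular C_s → 0 as s → ∞). -/

import Mathlib

open Real Filter

/-- The constant `C_s = (2^(4/(s−1))/(s−1)) · (√π Γ(s/2)/Γ((s−1)/2))^(2/(s−1))` from the
small-angle asymptotics of the angular part of the collision kernel. -/
noncomputable def Cs (s : ℝ) : ℝ :=
  (2:ℝ) ^ (4 / (s - 1)) / (s - 1) *
    (Real.sqrt π * Real.Gamma (s / 2) / Real.Gamma ((s - 1) / 2)) ^ (2 / (s - 1))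

/-! The base `√π Γ(s/2)/Γ((s−1)/2)` grows at most polynomially: since `Γ` is increasing on `[2, ∞)`
and `Γ((s−1)/2 + 1) = (s−1)/2 · Γ((s−1)/2)`, it lies between `1` and `√π (s−1)/2 ≤ s`. Its power with
exponent `2/(s−1)` is therefore squeezed between `1` and `s^(2/(s−1))`, which tends to `1`. Since also
`2^(4/(s−1)) → 1` and `s/(s−1) → 1`, the limit of `s·C_s` is `1`, and dividing by `s` gives
`C_s → 0`. -/

lemma base_bounds {s : ℝ} (hs : 5 ≤ s) :
    1 ≤ Real.sqrt π * Real.Gamma (s / 2) / Real.Gamma ((s - 1) / 2) ∧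
    Real.sqrt π * Real.Gamma (s / 2) / Real.Gamma ((s - 1) / 2) ≤ s := by
  have hG : 0 < Real.Gamma ((s - 1) / 2) := Real.Gamma_pos_of_pos (by linarith)
  have hm := Real.Gamma_strictMonoOn_Ici.monotoneOn
  have h1 : Real.Gamma ((s - 1) / 2) ≤ Real.Gamma (s / 2) :=
    hm (Set.mem_Ici.2 (by linarith)) (Set.mem_Ici.2 (by linarith)) (by linarith)
  have h2 : Real.Gamma (s / 2) ≤ (s - 1) / 2 * Real.Gamma ((s - 1) / 2) := by
    rw [← Real.Gamma_add_one (by linarith)]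
    exact hm (Set.mem_Ici.2 (by linarith)) (Set.mem_Ici.2 (by linarith)) (by linarith)
  have hp1 : 1 ≤ Real.sqrt π := Real.one_le_sqrt.2 (by linarith [Real.pi_gt_three])
  have hp2 : Real.sqrt π ≤ 2 := Real.sqrt_le_iff.2 ⟨by norm_num, by linarith [Real.pi_le_four]⟩
  constructor
  · rw [le_div_iff₀ hG]
    nlinarith
  · rw [div_le_iff₀ hG]
    calc Real.sqrt π * Real.Gamma (s / 2)
        ≤ 2 * ((s - 1) / 2 * Real.Gamma ((s - 1) / 2)) := by gcongr
      _ ≤ s * Real.Gamma ((s - 1) / 2) := by nlinarith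

lemma tendsto_base_rpow :
    Tendsto (fun s : ℝ => (Real.sqrt π * Real.Gamma (s / 2) / Real.Gamma ((s - 1) / 2)) ^
      (2 / (s - 1))) atTop (nhds 1) := by
  have hu : Tendsto (fun s : ℝ => s ^ (2 / (s - 1))) atTop (nhds 1) := by
    simpa [sub_eq_add_neg] using tendsto_rpow_div_mul_add 2 1 (-1) (by norm_num)
  refine tendsto_of_tendsto_of_tendsto_of_le_of_le' tendsto_const_nhds hu ?_ ?_
  · filter_upwards [eventually_ge_atTop (5 : ℝ)] with s hs
    exact Real.one_le_rpow (base_bounds hs).1 (div_nonneg (by norm_num) (by linarith))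
  · filter_upwards [eventually_ge_atTop (5 : ℝ)] with s hs
    obtain ⟨h1, h2⟩ := base_bounds hs
    exact Real.rpow_le_rpow (by linarith) h2 (div_nonneg (by norm_num) (by linarith))

/-- `s·C_s → 1` as `s → ∞`; in particular `C_s → 0` as `s → ∞`. -/
theorem stmt13 :
    Tendsto (fun s : ℝ => s * Cs s) atTop (nhds 1) ∧
    Tendsto Cs atTop (nhds 0) := by
  have hsub : Tendsto (fun s : ℝ => s - 1) atTop atTop :=
    tendsto_atTop_add_const_right _ (-1) tendsto_id
  have h2 : Tendsto (fun s : ℝ => (2 : ℝ) ^ (4 / (s - 1))) atTop (nhds 1) := by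
    simpa [Function.comp_def] using (Real.continuousAt_const_rpow (a := (2 : ℝ)) (b := 0) (by norm_num)).tendsto.comp
      (hsub.const_div_atTop 4)
  have hq : Tendsto (fun s : ℝ => 1 + 1 / (s - 1)) atTop (nhds 1) := by
    simpa using (hsub.const_div_atTop 1).const_add 1
  have hmain : Tendsto (fun s : ℝ => s * Cs s) atTop (nhds 1) := by
    have h := (hq.mul h2).mul tendsto_base_rpow
    simp only [mul_one] at h
    refine h.congr' ?_
    filter_upwards [eventually_gt_atTop (1 : ℝ)] with s hs
    have hne : s - 1 ≠ 0 := by linarith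
    have e : 1 + 1 / (s - 1) = s / (s - 1) := by field_simp; ring
    rw [e, Cs]
    ring
  refine ⟨hmain, ?_⟩
  have h := hmain.mul tendsto_inv_atTop_zero
  rw [mul_zero] at h
  refine h.congr' ?_
  filter_upwards [eventually_gt_atTop (0 : ℝ)] with s hs
  field_simp
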